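/- Let k ∈ ℤ≥0. The Poincaré series P_{Γ,χ}f_{k,m} is not identically zero on ℍ provided at least one of the following holds: (1) k = 0 and N > 4·2^{1/(m−2)}·√(4^{1/(m−2)} − 1); (2) m = 4 and N > 4/(2^{1/(k+2)} − 2^{−1/(k+2)}); (3) 0 < k ≤ m−4 and N ≥ 4·√(((k+2)/(m−2))·(1 + (k+2)/(m−2))); (4) 0 < m−4 ≤ k and N ≥ 4·√((k/(m−4))·(1 + k/(m−4))). -/

import Mathlib

open Complex MeasureTheory Filter Topology
open scoped Real

set_option autoImplicit false

noncomputable section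

/-- `SL₂(ℤ)`. -/
abbrev SL2Z := Matrix.SpecialLinearGroup (Fin 2) ℤ

/-- The upper half-plane, as a subset of `ℂ`. -/
def UH : Set ℂ := {z : ℂ | 0 < z.im}

/-- The `(i,j)` entry of `γ ∈ SL₂(ℤ)`, as a complex number. -/
def entry (γ : SL2Z) (i j : Fin 2) : ℂ :=
  ((γ : Matrix (Fin 2) (Fin 2) ℤ) i j : ℂ)

/-- The Möbius action of `SL₂(ℤ)` on the upper half-plane (as a map on `ℂ`). -/
def act (γ : SL2Z) (z : ℂ) : ℂ :=
  (entry γ 0 0 * z + entry γ 0 1) / (entry γ 1 0 * z + entry γ 1 1)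

/-- The hyperbolic measure `dv(x+iy) = dx·dy/y²` on the upper half-plane. -/
def hypMeasure : Measure ℂ :=
  ((volume : Measure ℂ).withDensity fun z => ENNReal.ofReal (1 / z.im ^ 2)).restrict UH

/-- A multiplier system on `Γ`: holomorphic square roots `η_γ` of `z ↦ c_γ z + d_γ`
satisfying the cocycle condition. -/
structure IsMultiplierSystem (Γ : Subgroup SL2Z) (η : Γ → ℂ → ℂ) : Prop where
  holo : ∀ γ : Γ, DifferentiableOn ℂ (η γ) UH
  sq : ∀ γ : Γ, ∀ z ∈ UH, η γ z ^ 2 = entry (γ : SL2Z) 1 0 * z + entry (γ : SL2Z) 1 1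
  cocycle : ∀ γ₁ γ₂ : Γ, ∀ z ∈ UH,
    η (γ₁ * γ₂) z = η γ₁ (act (γ₂ : SL2Z) z) * η γ₂ z

/-- `χ` has finite order. -/
def HasFiniteOrderChar (Γ : Subgroup SL2Z) (χ : Γ →* ℂˣ) : Prop :=
  ∃ n : ℕ, 0 < n ∧ ∀ γ : Γ, χ γ ^ n = 1

/-- `f` is a cusp form of weight `m = 5/2 + j` for `(Γ, η, χ)`; here
`η γ z ^ (-(5 + 2j))` is the integer power `η_γ(z)^{-2m}`, and the boundedness of
`‖f‖·(Im z)^{m/2}` on the upper half-plane expresses the vanishing at all cusps. -/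
def IsCuspForm (Γ : Subgroup SL2Z) (η : Γ → ℂ → ℂ) (χ : Γ →* ℂˣ) (m : ℝ) (j : ℕ)
    (f : ℂ → ℂ) : Prop :=
  DifferentiableOn ℂ f UH ∧
  (∀ γ : Γ, ∀ z ∈ UH,
    f (act (γ : SL2Z) z) * η γ z ^ (-(5 + 2 * (j : ℤ))) = (χ γ : ℂ) * f z) ∧
  ∃ C : ℝ, ∀ z ∈ UH, ‖f z‖ * z.im ^ (m / 2) ≤ C

/-- A measurable fundamental domain for the action of `Γ` on the upper half-plane,
with respect to the hyperbolic measure. -/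
def IsFundDom (Γ : Subgroup SL2Z) (F : Set ℂ) : Prop :=
  MeasurableSet F ∧ F ⊆ UH ∧
  hypMeasure (UH \ ⋃ γ : Γ, act (γ : SL2Z) '' F) = 0 ∧
  ∀ γ : Γ, γ ≠ 1 → hypMeasure (F ∩ act (γ : SL2Z) '' F) = 0

/-- `f_{k,m}(z) = (2i)^m (z-i)^k / (z+i)^{m+k}` (principal powers). -/
def fkm (m : ℝ) (k : ℕ) (z : ℂ) : ℂ :=
  (2 * I) ^ (m : ℂ) * (z - I) ^ k / (z + I) ^ ((m : ℂ) + (k : ℂ))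

/-- The term indexed by `γ` of the Poincaré series `P_{Γ,χ} f_{k,m}`;
`η γ z ^ (-(5 + 2j))` is the integer power `η_γ(z)^{-2m}` for `m = 5/2 + j`. -/
def PTerm (Γ : Subgroup SL2Z) (η : Γ → ℂ → ℂ) (χ : Γ →* ℂˣ) (m : ℝ) (j : ℕ) (k : ℕ)
    (γ : Γ) (z : ℂ) : ℂ :=
  (starRingEnd ℂ) (χ γ : ℂ) * fkm m k (act (γ : SL2Z) z) * η γ z ^ (-(5 + 2 * (j : ℤ)))

/-- The Poincaré series `P_{Γ,χ} f_{k,m}`. -/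
def PoincareP (Γ : Subgroup SL2Z) (η : Γ → ℂ → ℂ) (χ : Γ →* ℂˣ) (m : ℝ) (j : ℕ) (k : ℕ)
    (z : ℂ) : ℂ :=
  ∑' γ : Γ, PTerm Γ η χ m j k γ z

open UpperHalfPlane (im_pos) in
theorem coe_act_eq (g : SL2Z) (z : UpperHalfPlane) : ((g • z : UpperHalfPlane) : ℂ) = act g (z : ℂ) := by
  rw [UpperHalfPlane.coe_specialLinearGroup_apply]
  simp [act, entry]

theorem coe_mem_UH (z : UpperHalfPlane) : (z : ℂ) ∈ UH := z.im_pos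

theorem eta_one {Γ : Subgroup SL2Z} {η : Γ → ℂ → ℂ} (hη : IsMultiplierSystem Γ η) :
    η 1 I = 1 := by
  have hI : (I : ℂ) ∈ UH := by simp [UH]
  have h1 := hη.cocycle 1 1 I hI
  have h2 := hη.sq 1 I hI
  have h3 : act ((1 : Γ) : SL2Z) I = I := by simp [act, entry]
  rw [h3, one_mul] at h1
  have h4 : η 1 I ^ 2 = 1 := by rw [h2]; simp [entry]
  rw [h1, ← pow_two, h4]

theorem eta_one' {Γ : Subgroup SL2Z} {η : Γ → ℂ → ℂ} (hη : IsMultiplierSystem Γ η)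
    (z : ℂ) (hI : z ∈ UH) :
    η 1 z = 1 := by
  have h1 := hη.cocycle 1 1 z hI
  have h2 := hη.sq 1 z hI
  have h3 : act ((1 : Γ) : SL2Z) z = z := by simp [act, entry]
  rw [h3, one_mul] at h1
  have h4 : η 1 z ^ 2 = 1 := by rw [h2]; simp [entry]
  rw [h1, ← pow_two, h4]

theorem no_neg_one {Γ : Subgroup SL2Z} {η : Γ → ℂ → ℂ} (hη : IsMultiplierSystem Γ η)
    (γ : Γ) (h : (γ : SL2Z) = -1) : False := by
  have hI : (I : ℂ) ∈ UH := by simp [UH]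
  have h1 := hη.cocycle γ γ I hI
  have hg : γ * γ = 1 := by ext1; simp [h]
  have h2 := hη.sq γ I hI
  have h3 : act (γ : SL2Z) I = I := by simp [act, entry, h]
  rw [h3, hg, eta_one hη, ← pow_two, h2] at h1
  simp [entry, h] at h1
  norm_num [Complex.ext_iff] at h1

theorem frob_bound (N : ℕ) (hN : 0 < N) (Γ : Subgroup SL2Z)
    (hcong : ∀ γ : Γ,
      (N : ℤ) ∣ (((γ : SL2Z) : Matrix (Fin 2) (Fin 2) ℤ) 0 0 - 1) ∧
      (N : ℤ) ∣ (((γ : SL2Z) : Matrix (Fin 2) (Fin 2) ℤ) 0 1) ∧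
      (N : ℤ) ∣ (((γ : SL2Z) : Matrix (Fin 2) (Fin 2) ℤ) 1 0) ∧
      (N : ℤ) ∣ (((γ : SL2Z) : Matrix (Fin 2) (Fin 2) ℤ) 1 1 - 1))
    (η : Γ → ℂ → ℂ) (hη : IsMultiplierSystem Γ η) (γ : Γ) (hγ : γ ≠ 1) :
    (N : ℤ) ^ 2 + 2 ≤ (γ : SL2Z) 0 0 ^ 2 + (γ : SL2Z) 0 1 ^ 2 + (γ : SL2Z) 1 0 ^ 2
      + (γ : SL2Z) 1 1 ^ 2 := by
  obtain ⟨h00, h01, h10, h11⟩ := hcong γ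
  have hdet := Matrix.det_fin_two ((γ : SL2Z) : Matrix (Fin 2) (Fin 2) ℤ)
  rw [Matrix.SpecialLinearGroup.det_coe] at hdet
  have hne1 : (γ : SL2Z) ≠ 1 := fun h => hγ (by ext1; simpa using h)
  have hnm1 : (γ : SL2Z) ≠ -1 := fun h => no_neg_one hη γ h
  have hsq : (γ : SL2Z) * γ ≠ -1 := fun h => no_neg_one hη (γ * γ) (by simpa using h)
  generalize ha : ((γ : SL2Z) : Matrix (Fin 2) (Fin 2) ℤ) 0 0 = a at *
  generalize hb : ((γ : SL2Z) : Matrix (Fin 2) (Fin 2) ℤ) 0 1 = b at *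
  generalize hc : ((γ : SL2Z) : Matrix (Fin 2) (Fin 2) ℤ) 1 0 = c at *
  generalize hd : ((γ : SL2Z) : Matrix (Fin 2) (Fin 2) ℤ) 1 1 = d at *
  have hNZ : (0 : ℤ) < N := by exact_mod_cast hN
  have key : ∀ x : ℤ, (N : ℤ) ∣ x → x ≠ 0 → (N : ℤ) ^ 2 ≤ x ^ 2 := by
    intro x hx h0
    have := Int.le_of_dvd (abs_pos.2 h0) ((dvd_abs _ _).2 hx)
    rw [← sq_abs x]
    gcongr
  by_cases hbc : b = 0 ∧ c = 0
  · obtain ⟨rfl, rfl⟩ := hbc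
    have had : a * d = 1 := by linarith
    rcases Int.eq_one_or_neg_one_of_mul_eq_one' had with ⟨h1, h2⟩ | ⟨h1, h2⟩
    · exact absurd (by ext i j; fin_cases i <;> fin_cases j <;> simp [ha, hb, hc, hd, h1, h2]) hne1
    · exact absurd (by ext i j; fin_cases i <;> fin_cases j <;> simp [ha, hb, hc, hd, h1, h2]) hnm1
  have hbc2 : (N : ℤ) ^ 2 ≤ b ^ 2 + c ^ 2 := by
    by_cases h : b = 0
    · have := key c h10 (fun h' => hbc ⟨h, h'⟩)
      nlinarith
    · have := key b h01 h
      nlinarith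
  by_cases ha0 : a = 0
  · have hN1 : (N : ℤ) = 1 := by
      rw [ha0] at h00
      have := Int.le_of_dvd one_pos ((dvd_neg (a := (N:ℤ))).1 (by simpa using h00))
      omega
    have hbcm : b * c = -1 := by rw [ha0] at hdet; linarith
    have hd0 : d ≠ 0 := by
      intro hd0
      apply hsq
      ext i j
      fin_cases i <;> fin_cases j <;>
        simp [Matrix.mul_apply, Fin.sum_univ_two, ha, hb, hc, hd, ha0, hd0] <;> linarith
    have : 0 < d ^ 2 := by positivity
    nlinarith [sq_nonneg (b + c)]
  by_cases hd0 : d = 0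
  · have hN1 : (N : ℤ) = 1 := by
      rw [hd0] at h11
      have := Int.le_of_dvd one_pos ((dvd_neg (a := (N:ℤ))).1 (by simpa using h11))
      omega
    have hbcm : b * c = -1 := by rw [hd0] at hdet; linarith
    have : 0 < a ^ 2 := by positivity
    nlinarith [sq_nonneg (b + c)]
  have h1 : 0 < a ^ 2 := by positivity
  have h2 : 0 < d ^ 2 := by positivity
  linarith

theorem cosh_dist_I (g : SL2Z) :
    Real.cosh (dist (g • UpperHalfPlane.I) UpperHalfPlane.I) =
      ((g 0 0 ^ 2 + g 0 1 ^ 2 + g 1 0 ^ 2 + g 1 1 ^ 2 : ℤ) : ℝ) / 2 := by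
  have hdet := Matrix.det_fin_two (g : Matrix (Fin 2) (Fin 2) ℤ)
  rw [Matrix.SpecialLinearGroup.det_coe] at hdet
  have h1 : (((g • UpperHalfPlane.I : UpperHalfPlane) : ℂ)) = act g I := coe_act_eq g _
  rw [UpperHalfPlane.cosh_dist']
  have hre : (g • UpperHalfPlane.I).re = (act g I).re := by rw [← h1]; rfl
  have him : (g • UpperHalfPlane.I).im = (act g I).im := by rw [← h1]; rfl
  rw [hre, him]
  generalize ha : (g : Matrix (Fin 2) (Fin 2) ℤ) 0 0 = a at *
  generalize hb : (g : Matrix (Fin 2) (Fin 2) ℤ) 0 1 = b at *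
  generalize hc : (g : Matrix (Fin 2) (Fin 2) ℤ) 1 0 = c at *
  generalize hd : (g : Matrix (Fin 2) (Fin 2) ℤ) 1 1 = d at *
  have hdet' : (a * d - b * c : ℝ) = 1 := by exact_mod_cast hdet.symm
  have hne : ((c:ℝ) ^ 2 + d ^ 2) ≠ 0 := by
    intro h
    have hc0 : (c : ℝ) = 0 := by nlinarith [sq_nonneg (c:ℝ), sq_nonneg (d:ℝ)]
    have hd0 : (d : ℝ) = 0 := by nlinarith [sq_nonneg (c:ℝ), sq_nonneg (d:ℝ)]
    rw [hc0, hd0] at hdet'; norm_num at hdet'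
  have e1 : (act g I).re = (a * c + b * d) / (c ^ 2 + d ^ 2 : ℝ) := by
    simp [act, entry, ha, hb, hc, hd, Complex.div_re, Complex.normSq_apply]
    rw [add_comm ((d:ℝ) * d)]
    field_simp
    ring
  have e2 : (act g I).im = 1 / (c ^ 2 + d ^ 2 : ℝ) := by
    simp [act, entry, ha, hb, hc, hd, Complex.div_im, Complex.normSq_apply]
    rw [add_comm ((d:ℝ) * d), ← pow_two, ← pow_two, ← sub_div, hdet', one_div]
  have e3 : ((a * c + b * d : ℝ)) ^ 2 + 1 = (a ^ 2 + b ^ 2) * (c ^ 2 + d ^ 2) := by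
    rw [show (1:ℝ) = (a * d - b * c) ^ 2 by rw [hdet']; norm_num]; ring
  rw [e1, e2]
  simp only [UpperHalfPlane.I_re, UpperHalfPlane.I_im]
  field_simp
  push_cast
  linear_combination e3

theorem dist_smul_SL2Z (g : SL2Z) (z w : UpperHalfPlane) : dist (g • z) (g • w) = dist z w := by
  have := dist_smul (g.map (Int.castRingHom ℝ)) z w
  rw [← this]
  rfl

theorem disc_inj (N : ℕ) (g : SL2Z) (u : ℝ) (hu : 0 ≤ u) (hNu : 16 * u * (1 + u) = (N : ℝ) ^ 2)
    (hg : (N : ℤ) ^ 2 + 2 ≤ g 0 0 ^ 2 + g 0 1 ^ 2 + g 1 0 ^ 2 + g 1 1 ^ 2)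
    (z : UpperHalfPlane) (h1 : Real.cosh (dist z UpperHalfPlane.I) < 1 + 2 * u)
    (h2 : Real.cosh (dist (g • z) UpperHalfPlane.I) < 1 + 2 * u) : False := by
  have hR := Real.cosh_arcosh (x := 1 + 2 * u) (by linarith)
  set R := Real.arcosh (1 + 2 * u)
  have hR0 : 0 ≤ R := Real.arcosh_nonneg (by linarith)
  rw [← hR, Real.cosh_lt_cosh, abs_of_nonneg dist_nonneg, abs_of_nonneg hR0] at h1 h2
  have h3 := dist_triangle (g • UpperHalfPlane.I) (g • z) UpperHalfPlane.I
  rw [dist_smul_SL2Z, dist_comm UpperHalfPlane.I z] at h3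
  have h4 : dist (g • UpperHalfPlane.I) UpperHalfPlane.I < 2 * R := by linarith
  have h5 := (Real.cosh_lt_cosh (x := dist (g • UpperHalfPlane.I) UpperHalfPlane.I) (y := 2 * R)).2
    (by rwa [abs_of_nonneg dist_nonneg, abs_of_nonneg (by linarith)])
  rw [cosh_dist_I, Real.cosh_two_mul, Real.sinh_sq, hR] at h5
  have h6 : ((N : ℝ) ^ 2 + 2) ≤ ((g 0 0 ^ 2 + g 0 1 ^ 2 + g 1 0 ^ 2 + g 1 1 ^ 2 : ℤ) : ℝ) := by
    exact_mod_cast hg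
  nlinarith

/-- Auxiliary logarithmic difference. -/
def auxH (a b p q s : ℝ) : ℝ :=
  a * (Real.log (p - s) - Real.log (p + s)) + b * (Real.log (q + s) - Real.log (q - s))

theorem auxH_hasDerivAt (a b p q s : ℝ) (h1 : |s| < p) (h2 : |s| < q) :
    HasDerivAt (auxH a b p q)
      (2 * (b * q * (p ^ 2 - s ^ 2) - a * p * (q ^ 2 - s ^ 2)) /
        ((p ^ 2 - s ^ 2) * (q ^ 2 - s ^ 2))) s := by
  rw [abs_lt] at h1 h2
  have e1 : p - s ≠ 0 := by linarith
  have e2 : p + s ≠ 0 := by linarith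
  have e3 : q - s ≠ 0 := by linarith
  have e4 : q + s ≠ 0 := by linarith
  have d1 : HasDerivAt (fun s => Real.log (p - s)) (-1 / (p - s)) s :=
    ((hasDerivAt_id s).const_sub p).log e1
  have d2 : HasDerivAt (fun s => Real.log (p + s)) (1 / (p + s)) s :=
    ((hasDerivAt_id s).const_add p).log e2
  have d3 : HasDerivAt (fun s => Real.log (q - s)) (-1 / (q - s)) s :=
    ((hasDerivAt_id s).const_sub q).log e3
  have d4 : HasDerivAt (fun s => Real.log (q + s)) (1 / (q + s)) s :=
    ((hasDerivAt_id s).const_add q).log e4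
  have := ((d1.sub d2).const_mul a).add ((d4.sub d3).const_mul b)
  refine this.congr_deriv ?_
  have e5 : (p ^ 2 - s ^ 2) = (p - s) * (p + s) := by ring
  have e6 : (q ^ 2 - s ^ 2) = (q - s) * (q + s) := by ring
  rw [e5, e6]
  field_simp
  ring

theorem auxH_mono (a b p q x y : ℝ) (hx : 0 ≤ x) (hxy : x ≤ y) (hyp : y < p) (hyq : y < q)
    (h : ∀ s ∈ Set.Icc x y, 0 ≤ b * q * (p ^ 2 - s ^ 2) - a * p * (q ^ 2 - s ^ 2)) :
    auxH a b p q x ≤ auxH a b p q y := by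
  have hd : ∀ s ∈ Set.Icc x y, HasDerivAt (auxH a b p q)
      (2 * (b * q * (p ^ 2 - s ^ 2) - a * p * (q ^ 2 - s ^ 2)) /
        ((p ^ 2 - s ^ 2) * (q ^ 2 - s ^ 2))) s := fun s hs =>
    auxH_hasDerivAt a b p q s (by rw [abs_of_nonneg (hx.trans hs.1)]; linarith [hs.2])
      (by rw [abs_of_nonneg (hx.trans hs.1)]; linarith [hs.2])
  refine monotoneOn_of_deriv_nonneg (convex_Icc x y)
    (fun s hs => (hd s hs).continuousAt.continuousWithinAt)
    (fun s hs => (hd s (interior_subset hs)).differentiableAt.differentiableWithinAt) ?_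
    ⟨le_rfl, hxy⟩ ⟨hxy, le_rfl⟩ hxy
  intro s hs
  have hs' := interior_subset hs
  rw [(hd s hs').deriv]
  have := h s hs'
  have h0 : 0 ≤ s := hx.trans hs'.1
  have e1 : 0 ≤ p ^ 2 - s ^ 2 := by nlinarith [hs'.2]
  have e2 : 0 ≤ q ^ 2 - s ^ 2 := by nlinarith [hs'.2]
  positivity

theorem auxH_neg (a b p q s : ℝ) : auxH (-a) (-b) p q s = - auxH a b p q s := by
  unfold auxH; ring

theorem auxH_anti (a b p q x y : ℝ) (hx : 0 ≤ x) (hxy : x ≤ y) (hyp : y < p) (hyq : y < q)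
    (h : ∀ s ∈ Set.Icc x y, b * q * (p ^ 2 - s ^ 2) - a * p * (q ^ 2 - s ^ 2) ≤ 0) :
    auxH a b p q y ≤ auxH a b p q x := by
  have := auxH_mono (-a) (-b) p q x y hx hxy hyp hyq (fun s hs => by have := h s hs; linarith)
  rw [auxH_neg, auxH_neg] at this
  linarith

theorem auxH_zero (a b p q : ℝ) : auxH a b p q 0 = 0 := by simp [auxH]

theorem auxH_iff (a b p q s : ℝ) (hs : 0 ≤ s) (h1 : s < p) (h2 : s < q) :
    (p + s) ^ a * (q - s) ^ b ≤ (p - s) ^ a * (q + s) ^ b ↔ 0 ≤ auxH a b p q s := by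
  have e1 : 0 < p - s := by linarith
  have e2 : 0 < p + s := by linarith
  have e3 : 0 < q - s := by linarith
  have e4 : 0 < q + s := by linarith
  rw [← Real.log_le_log_iff (by positivity) (by positivity), Real.log_mul (by positivity)
    (by positivity), Real.log_mul (by positivity) (by positivity), Real.log_rpow e1,
    Real.log_rpow e2, Real.log_rpow e3, Real.log_rpow e4]
  unfold auxH
  constructor <;> intro h <;> linarith

/-- The (unnormalised) Beta density. -/
def bG (a b x : ℝ) : ℝ := x ^ a * (1 - x) ^ b

theorem bG_cont (a b : ℝ) (ha : 0 < a) (hb : 0 < b) : Continuous (bG a b) := by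
  unfold bG
  exact (Real.continuous_rpow_const ha.le).mul
    ((Real.continuous_rpow_const hb.le).comp (continuous_const.sub continuous_id))

theorem bG_pos (a b x : ℝ) (h0 : 0 < x) (h1 : x < 1) : 0 < bG a b x := by
  unfold bG
  have : 0 < 1 - x := by linarith
  positivity

theorem bG_nonneg (a b x : ℝ) (h0 : 0 ≤ x) (h1 : x ≤ 1) : 0 ≤ bG a b x := by
  unfold bG
  have : 0 ≤ 1 - x := by linarith
  positivity

theorem mode_ineq (a b : ℝ) (hb : 0 < b) (hab : b < a) :
    ∫ x in (a / (a + b))..1, bG a b x < ∫ x in (0:ℝ)..(a / (a + b)), bG a b x := by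
  have ha : 0 < a := hb.trans hab
  have hc := bG_cont a b ha hb
  set p := a / (a + b) with hp
  set q := b / (a + b) with hq
  have hq1 : 1 - p = q := by rw [hp, hq]; field_simp; ring
  have hp0 : 0 < p := by positivity
  have hq0 : 0 < q := by positivity
  have hqp : q < p := by rw [hp, hq]; gcongr
  have hrel : a * q = b * p := by rw [hp, hq]; ring
  have key : ∀ s ∈ Set.Icc 0 q, bG a b (p + s) ≤ bG a b (p - s) := by
    intro s hs
    rcases eq_or_lt_of_le hs.2 with h | h
    · have : bG a b (p + s) = 0 := by
        unfold bG
        rw [show 1 - (p + s) = 0 by linarith, Real.zero_rpow hb.ne', mul_zero]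
      rw [this]
      exact bG_nonneg _ _ _ (by linarith) (by linarith [hs.1])
    · have := (auxH_iff a b p q s hs.1 (by linarith) h).2 (by
        rw [← auxH_zero a b p q]
        refine auxH_mono a b p q 0 s le_rfl hs.1 (by linarith) h ?_
        intro x hx
        have e : b * q * (p ^ 2 - x ^ 2) - a * p * (q ^ 2 - x ^ 2) = (a * p - b * q) * x ^ 2 := by
          linear_combination -(p * q) * hrel
        rw [e]
        have : b * q ≤ a * p := by gcongr
        have h0 := sub_nonneg.2 this
        positivity)
      unfold bG
      rw [show 1 - (p + s) = q - s by linarith, show 1 - (p - s) = q + s by linarith]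
      exact this
  have hL : ∫ x in p..1, bG a b x = ∫ s in (0:ℝ)..q, bG a b (p + s) := by
    rw [intervalIntegral.integral_comp_add_left (fun x => bG a b x) p]
    congr 1 <;> linarith
  have hR : ∫ x in (0:ℝ)..p, bG a b x = ∫ s in (0:ℝ)..p, bG a b (p - s) := by
    rw [intervalIntegral.integral_comp_sub_left (fun x => bG a b x) p]
    congr 1 <;> linarith
  have hi1 : ∀ x y, IntervalIntegrable (fun s => bG a b (p - s)) volume x y := fun x y =>
    (hc.comp (by fun_prop : Continuous fun s => p - s)).intervalIntegrable x y
  have hi2 : ∀ x y, IntervalIntegrable (fun s => bG a b (p + s)) volume x y := fun x y =>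
    (hc.comp (by fun_prop : Continuous fun s => p + s)).intervalIntegrable x y
  rw [hL, hR, ← intervalIntegral.integral_add_adjacent_intervals (hi1 0 q) (hi1 q p)]
  have h1 := intervalIntegral.integral_mono_on hq0.le (hi2 0 q) (hi1 0 q) key
  have h2 : 0 < ∫ s in q..p, bG a b (p - s) :=
    intervalIntegral.intervalIntegral_pos_of_pos_on (hi1 q p)
      (fun x hx => bG_pos _ _ _ (by linarith [hx.2]) (by linarith [hx.1])) hqp
  linarith

theorem mean_zero (a b : ℝ) (ha : 0 < a) (hb : 0 < b) :
    ∫ x in (0:ℝ)..1, (x - (a + 1) / (a + b + 2)) * bG a b x = 0 := by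
  have hc := bG_cont a b ha hb
  have hc2 : Continuous (fun x => x ^ (a + 1) * (1 - x) ^ (b + 1) : ℝ → ℝ) :=
    bG_cont (a + 1) (b + 1) (by linarith) (by linarith)
  have := intervalIntegral.integral_eq_sub_of_hasDerivAt_of_le (a := 0) (b := 1) zero_le_one
    (f := fun x => -(x ^ (a + 1) * (1 - x) ^ (b + 1)) / (a + b + 2))
    (f' := fun x => (x - (a + 1) / (a + b + 2)) * bG a b x)
    ((hc2.neg.div_const _).continuousOn) ?_ ?_
  · rw [this, Real.zero_rpow (by linarith), sub_self, Real.zero_rpow (by linarith)]; simp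
  · intro x hx
    have hx0 : 0 < x := hx.1
    have hx1 : 0 < 1 - x := by linarith [hx.2]
    have d1 := (hasDerivAt_id x).rpow_const (p := a + 1) (Or.inl hx0.ne')
    have d2 := ((hasDerivAt_id x).const_sub 1).rpow_const (p := b + 1) (Or.inl hx1.ne')
    refine ((d1.mul d2).neg.div_const (a + b + 2)).congr_deriv ?_
    simp only [id, add_sub_cancel_right, bG, Real.rpow_add_one hx0.ne', Real.rpow_add_one hx1.ne']
    field_simp
    ring
  · exact ((continuous_id.sub continuous_const).mul hc).intervalIntegrable 0 1

theorem mean_ineq (a b : ℝ) (ha : 0 < a) (hab : a < b) :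
    ∫ x in ((a + 1) / (a + b + 2))..1, bG a b x
      < ∫ x in (0:ℝ)..((a + 1) / (a + b + 2)), bG a b x := by
  have hb : 0 < b := ha.trans hab
  have hc := bG_cont a b ha hb
  have hmean := mean_zero a b ha hb
  set p := (a + 1) / (a + b + 2) with hp
  set q := (b + 1) / (a + b + 2) with hq
  have hq1 : 1 - p = q := by rw [hp, hq]; field_simp; ring
  have hp0 : 0 < p := by positivity
  have hq0 : 0 < q := by positivity
  have hpq : p < q := by rw [hp, hq]; gcongr
  have hcm : Continuous fun s => bG a b (p - s) := hc.comp (by fun_prop)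
  have hcp : Continuous fun s => bG a b (p + s) := hc.comp (by fun_prop)
  -- the last crossing point
  obtain ⟨s0, hs0, hmax⟩ : ∃ s0 ∈ {s ∈ Set.Icc 0 p | bG a b (p + s) ≤ bG a b (p - s)},
      ∀ s ∈ {s ∈ Set.Icc 0 p | bG a b (p + s) ≤ bG a b (p - s)}, s ≤ s0 := by
    have hcomp : IsCompact {s ∈ Set.Icc 0 p | bG a b (p + s) ≤ bG a b (p - s)} :=
      isCompact_Icc.inter_right (isClosed_le hcp hcm)
    exact hcomp.exists_isMaxOn ⟨0, ⟨le_rfl, hp0.le⟩, by simp⟩ continuousOn_id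
  obtain ⟨⟨hs00, hs0p⟩, hs0le⟩ := hs0
  have hs0lt : s0 < p := by
    rcases eq_or_lt_of_le hs0p with h | h
    · exfalso
      rw [h] at hs0le
      have h1 := bG_pos a b (p + p) (by linarith) (by linarith)
      have h2 : bG a b (p - p) = 0 := by
        unfold bG; rw [sub_self, Real.zero_rpow ha.ne', zero_mul]
      linarith
    · exact h
  have conv : ∀ s, 0 ≤ s → s < p → (bG a b (p + s) ≤ bG a b (p - s) ↔ 0 ≤ auxH a b p q s) := by
    intro s h0 h1
    rw [← auxH_iff a b p q s h0 h1 (by linarith)]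
    unfold bG
    rw [show 1 - (p + s) = q - s by linarith, show 1 - (p - s) = q + s by linarith]
  have hH0 := (conv s0 hs00 hs0lt).1 hs0le
  have hlow : ∀ s, 0 ≤ s → s ≤ s0 → bG a b (p + s) ≤ bG a b (p - s) := by
    intro s h0 h1
    rw [conv s h0 (by linarith)]
    have hK : 0 ≤ b * q - a * p := by
      have : a * p ≤ b * q := by gcongr
      linarith
    by_cases h : 0 ≤ b * q * (p ^ 2 - s ^ 2) - a * p * (q ^ 2 - s ^ 2)
    · rw [← auxH_zero a b p q]
      refine auxH_mono a b p q 0 s le_rfl h0 (by linarith) (by linarith) ?_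
      intro x hx
      have : x ^ 2 ≤ s ^ 2 := by gcongr <;> first | exact hx.1 | exact hx.2
      nlinarith
    · refine hH0.trans (auxH_anti a b p q s s0 h0 h1 hs0lt (by linarith) ?_)
      intro x hx
      have : s ^ 2 ≤ x ^ 2 := by gcongr; exact hx.1
      nlinarith
  have key : ∀ s ∈ Set.Icc 0 p, (s - s0) * bG a b (p - s) ≤ (s - s0) * bG a b (p + s) := by
    intro s hs
    rcases le_or_gt s s0 with h | h
    · exact mul_le_mul_of_nonpos_left (hlow s hs.1 h) (by linarith)
    · have : bG a b (p - s) ≤ bG a b (p + s) := by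
        by_contra hcon
        have := hmax s ⟨hs, (not_le.1 hcon).le⟩
        linarith
      exact mul_le_mul_of_nonneg_left this (by linarith)
  have hi1 : ∀ x y, IntervalIntegrable (fun s => (s - s0) * bG a b (p - s)) volume x y :=
    fun x y => ((continuous_id.sub continuous_const).mul hcm).intervalIntegrable x y
  have hi2 : ∀ x y, IntervalIntegrable (fun s => (s - s0) * bG a b (p + s)) volume x y :=
    fun x y => ((continuous_id.sub continuous_const).mul hcp).intervalIntegrable x y
  have h1 := intervalIntegral.integral_mono_on hp0.le (hi1 0 p) (hi2 0 p) key
  have h2 : 0 < ∫ s in p..q, (s - s0) * bG a b (p + s) :=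
    intervalIntegral.intervalIntegral_pos_of_pos_on (hi2 p q)
      (fun x hx => mul_pos (by linarith [hx.1])
        (bG_pos _ _ _ (by linarith [hx.1]) (by linarith [hx.2]))) hpq
  have h3 := intervalIntegral.integral_add_adjacent_intervals (hi2 0 p) (hi2 p q)
  have hL : ∫ s in (0:ℝ)..q, (s - s0) * bG a b (p + s) = ∫ x in p..1, (x - p - s0) * bG a b x := by
    have := intervalIntegral.integral_comp_add_left (a := 0) (b := q)
      (fun x => (x - p - s0) * bG a b x) p
    rw [show p + q = 1 by linarith, add_zero] at this
    rw [← this]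
    congr 1; ext s; ring_nf
  have hR : ∫ s in (0:ℝ)..p, (s - s0) * bG a b (p - s) = ∫ x in 0..p, (p - x - s0) * bG a b x := by
    have := intervalIntegral.integral_comp_sub_left (a := 0) (b := p)
      (fun x => (p - x - s0) * bG a b x) p
    rw [sub_self, sub_zero] at this
    rw [← this]
    congr 1; ext s; ring_nf
  have j0 : ∀ x y, IntervalIntegrable (bG a b) volume x y := fun x y => hc.intervalIntegrable x y
  have j1 : ∀ x y, IntervalIntegrable (fun x => (x - p) * bG a b x) volume x y := fun x y =>
    ((continuous_id.sub continuous_const).mul hc).intervalIntegrable x y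
  have hL' : ∫ x in p..1, (x - p - s0) * bG a b x
      = (∫ x in p..1, (x - p) * bG a b x) - s0 * ∫ x in p..1, bG a b x := by
    rw [← intervalIntegral.integral_const_mul, ← intervalIntegral.integral_sub (j1 _ _)
      ((j0 _ _).const_mul _)]
    congr 1; ext x; ring
  have hR' : ∫ x in (0:ℝ)..p, (p - x - s0) * bG a b x
      = -(∫ x in (0:ℝ)..p, (x - p) * bG a b x) - s0 * ∫ x in (0:ℝ)..p, bG a b x := by
    rw [← intervalIntegral.integral_const_mul, ← intervalIntegral.integral_neg,
      ← intervalIntegral.integral_sub (f := fun x => -((x - p) * bG a b x)) (j1 _ _).neg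
        ((j0 _ _).const_mul _)]
    congr 1; ext x; ring
  have h4 := intervalIntegral.integral_add_adjacent_intervals (j1 0 p) (j1 p 1)
  rw [hmean] at h4
  have h5 : 0 < s0 * ((∫ x in (0:ℝ)..p, bG a b x) - ∫ x in p..1, bG a b x) := by linarith
  have := pos_of_mul_pos_right h5 hs00
  linarith

theorem half_of_le (a b t M : ℝ) (hi : IntervalIntegrable (bG a b) volume 0 1) (hM0 : 0 ≤ M)
    (hMt : M ≤ t) (ht1 : t < 1)
    (h : ∫ x in M..1, bG a b x < ∫ x in (0:ℝ)..M, bG a b x) :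
    ∫⁻ x in Set.Ico t 1, ENNReal.ofReal (bG a b x) <
      ∫⁻ x in Set.Ioo 0 t, ENNReal.ofReal (bG a b x) := by
  have hii : ∀ x y, 0 ≤ x → x ≤ y → y ≤ 1 → IntervalIntegrable (bG a b) volume x y := by
    intro x y h0 hxy h1
    refine hi.mono_set ?_
    rw [Set.uIcc_of_le hxy, Set.uIcc_of_le zero_le_one]
    exact Set.Icc_subset_Icc h0 h1
  have hnn : ∀ x y, 0 ≤ x → x ≤ y → y ≤ 1 → 0 ≤ ∫ x in x..y, bG a b x := by
    intro x y h0 hxy h1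
    exact intervalIntegral.integral_nonneg hxy (fun z hz =>
      bG_nonneg a b z (h0.trans hz.1) (hz.2.trans h1))
  have e1 := intervalIntegral.integral_add_adjacent_intervals (hii 0 M le_rfl hM0 (by linarith))
    (hii M t hM0 hMt ht1.le)
  have e2 := intervalIntegral.integral_add_adjacent_intervals (hii M t hM0 hMt ht1.le)
    (hii t 1 (by linarith) ht1.le le_rfl)
  have e3 := hnn M t hM0 hMt ht1.le
  have hlt : ∫ x in t..1, bG a b x < ∫ x in (0:ℝ)..t, bG a b x := by linarith
  have ht0 : 0 ≤ t := hM0.trans hMt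
  have conv : ∀ x y, 0 ≤ x → x ≤ y → y ≤ 1 → ∫⁻ z in Set.Ioc x y, ENNReal.ofReal (bG a b z)
      = ENNReal.ofReal (∫ z in x..y, bG a b z) := by
    intro x y h0 hxy h1
    rw [intervalIntegral.integral_of_le hxy]
    rw [ofReal_integral_eq_lintegral_ofReal]
    · exact (intervalIntegrable_iff_integrableOn_Ioc_of_le hxy).1 (hii x y h0 hxy h1)
    · filter_upwards [ae_restrict_mem measurableSet_Ioc] with z hz
      exact bG_nonneg a b z (h0.trans hz.1.le) (hz.2.trans h1)
  rw [restrict_Ico_eq_restrict_Ioc, restrict_Ioo_eq_restrict_Ioc, conv t 1 ht0 ht1.le le_rfl,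
    conv 0 t le_rfl ht0 ht1.le]
  exact (ENNReal.ofReal_lt_ofReal_iff_of_nonneg (hnn t 1 ht0 ht1.le le_rfl)).2 hlt

theorem half_zero (b t : ℝ) (hb : -1 < b) (ht0 : 0 ≤ t) (ht1 : t < 1)
    (h : (1 - t) ^ (b + 1) < 1 / 2) :
    ∫⁻ x in Set.Ico t 1, ENNReal.ofReal (bG 0 b x) <
      ∫⁻ x in Set.Ioo 0 t, ENNReal.ofReal (bG 0 b x) := by
  have hG : bG 0 b = fun x => (1 - x) ^ b := by ext x; simp [bG]
  refine half_of_le 0 b t t ?_ ht0 le_rfl ht1 ?_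
  · rw [hG]
    have := (intervalIntegral.intervalIntegrable_rpow' (a := 0) (b := 1) hb).comp_sub_left 1
    simpa using this.symm
  · rw [hG]
    have e : ∀ x y : ℝ, ∫ z in x..y, (1 - z) ^ b = ((1 - x) ^ (b + 1) - (1 - y) ^ (b + 1)) / (b + 1) := by
      intro x y
      rw [intervalIntegral.integral_comp_sub_left (fun z => z ^ b) 1, integral_rpow (Or.inl hb)]
    rw [e, e]
    have hb1 : 0 < b + 1 := by linarith
    rw [sub_self, Real.zero_rpow hb1.ne', sub_zero, sub_zero, Real.one_rpow]
    gcongr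
    linarith

theorem half_all (N : ℕ) (m : ℝ) (j k : ℕ) (hm : m = 5 / 2 + j) (u : ℝ) (hu : 0 < u)
    (hNu : 16 * u * (1 + u) = (N : ℝ) ^ 2)
    (hcase :
      (k = 0 ∧ (N : ℝ) > 4 * (2 : ℝ) ^ (1 / (m - 2)) * Real.sqrt ((4 : ℝ) ^ (1 / (m - 2)) - 1)) ∨
      (m = 4 ∧ (N : ℝ) > 4 / ((2 : ℝ) ^ (1 / ((k : ℝ) + 2)) - (2 : ℝ) ^ (-(1 / ((k : ℝ) + 2))))) ∨
      (0 < k ∧ (k : ℝ) ≤ m - 4 ∧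
        (N : ℝ) ≥ 4 * Real.sqrt ((((k : ℝ) + 2) / (m - 2)) * (1 + ((k : ℝ) + 2) / (m - 2)))) ∨
      (0 < m - 4 ∧ m - 4 ≤ (k : ℝ) ∧
        (N : ℝ) ≥ 4 * Real.sqrt (((k : ℝ) / (m - 4)) * (1 + (k : ℝ) / (m - 4))))) :
    ∫⁻ x in Set.Ico (u / (1 + u)) 1, ENNReal.ofReal (bG ((k : ℝ) / 2) (m / 2 - 2) x) <
      ∫⁻ x in Set.Ioo 0 (u / (1 + u)), ENNReal.ofReal (bG ((k : ℝ) / 2) (m / 2 - 2) x) := by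
  have ht1 : u / (1 + u) < 1 := by rw [div_lt_one (by linarith)]; linarith
  have ht0 : 0 ≤ u / (1 + u) := by positivity
  have hm4 : ∀ n : ℕ, m - 4 ≠ (n : ℝ) := by
    intro n h
    rw [hm] at h
    have : (5 + 2 * (j : ℤ) : ℤ) = 8 + 2 * n := by
      have : (5 + 2 * (j : ℝ)) = 8 + 2 * n := by linarith
      exact_mod_cast this
    omega
  have hm2 : 0 < m - 2 := by rw [hm]; have : (0:ℝ) ≤ j := Nat.cast_nonneg j; linarith
  have comp : ∀ x : ℝ, 0 ≤ x → (N : ℝ) ≥ 4 * Real.sqrt (x * (1 + x)) →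
      x / (1 + x) ≤ u / (1 + u) := by
    intro x hx h
    have h2 : x * (1 + x) ≤ u * (1 + u) := by
      have h3 := Real.sq_sqrt (show 0 ≤ x * (1 + x) by positivity)
      have h4 : (4 * Real.sqrt (x * (1 + x))) ^ 2 ≤ (N : ℝ) ^ 2 := by gcongr
      rw [mul_pow, h3] at h4
      linarith
    have h3 : x ≤ u := by nlinarith
    rw [div_le_div_iff₀ (by linarith) (by linarith)]
    linarith
  rcases hcase with ⟨rfl, h⟩ | ⟨h, -⟩ | ⟨hk, hkm, h⟩ | ⟨hm0, hkm, h⟩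
  · simp only [Nat.cast_zero, zero_div]
    refine half_zero _ _ (by linarith) ht0 ht1 ?_
    set e := 1 / (m - 2) with he
    have he0 : 0 < e := by positivity
    set q := (4 : ℝ) ^ e with hq
    have hq1 : 1 < q := Real.one_lt_rpow (by norm_num) he0
    have h2q : (2 : ℝ) ^ e ^ 1 * (2 : ℝ) ^ e = q := by
      rw [pow_one, ← Real.mul_rpow (by norm_num) (by norm_num)]; norm_num [hq]
    rw [pow_one] at h2q
    have h2 : 16 * (q * (q - 1)) < (N : ℝ) ^ 2 := by
      have h3 := Real.sq_sqrt (show 0 ≤ q - 1 by linarith)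
      have h4 : (4 * (2 : ℝ) ^ e * Real.sqrt (q - 1)) ^ 2 < (N : ℝ) ^ 2 := by gcongr
      rw [mul_pow, mul_pow, h3, pow_two ((2:ℝ) ^ e), h2q] at h4
      linarith
    have h3 : q < 1 + u := by nlinarith
    have h4 : 1 - u / (1 + u) = (1 + u)⁻¹ := by field_simp; ring
    rw [h4, Real.inv_rpow (by linarith), one_div]
    have h5 : (2 : ℝ) = q ^ (m / 2 - 2 + 1) := by
      rw [hq, ← Real.rpow_mul (by norm_num), he, show 1 / (m - 2) * (m / 2 - 2 + 1) = 1 / 2 by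
        field_simp; ring, ← Real.sqrt_eq_rpow, show (4:ℝ) = 2 ^ 2 by norm_num,
        Real.sqrt_sq (by norm_num)]
    rw [inv_lt_inv₀ (by positivity) (by norm_num)]
    calc (2 : ℝ) = q ^ (m / 2 - 2 + 1) := h5
      _ < (1 + u) ^ (m / 2 - 2 + 1) := Real.rpow_lt_rpow (by linarith) h3 (by linarith)
  · exact absurd (by simp [h]) (hm4 0)
  · have hk0 : (0 : ℝ) < k := by exact_mod_cast hk
    have hlt : (k : ℝ) < m - 4 := lt_of_le_of_ne hkm (hm4 k).symm
    have h1 := comp _ (by positivity) h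
    have h2 : ((k : ℝ) + 2) / (m - 2) / (1 + ((k : ℝ) + 2) / (m - 2)) =
        ((k : ℝ) / 2 + 1) / ((k : ℝ) / 2 + (m / 2 - 2) + 2) := by
      have : 0 < m - 2 + (k + 2) := by linarith
      have : 0 < (k : ℝ) / 2 + (m / 2 - 2) + 2 := by linarith
      field_simp
      rw [eq_div_iff (by linarith)]
      ring
    rw [h2] at h1
    refine half_of_le _ _ _ _ ((bG_cont _ _ (by linarith) (by linarith)).intervalIntegrable _ _)
      ?_ h1 ht1 (mean_ineq _ _ (by linarith) (by linarith))
    have : 0 < (k : ℝ) / 2 + (m / 2 - 2) + 2 := by linarith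
    positivity
  · have hlt : m - 4 < (k : ℝ) := lt_of_le_of_ne hkm (hm4 k)
    have hk0 : (0 : ℝ) < k := by linarith
    have h1 := comp _ (by positivity) h
    have h2 : (k : ℝ) / (m - 4) / (1 + (k : ℝ) / (m - 4)) =
        ((k : ℝ) / 2) / ((k : ℝ) / 2 + (m / 2 - 2)) := by
      have : 0 < m - 4 + k := by linarith
      have : 0 < (k : ℝ) / 2 + (m / 2 - 2) := by linarith
      field_simp
      rw [eq_div_iff (by linarith)]
      ring
    rw [h2] at h1
    refine half_of_le _ _ _ _ ((bG_cont _ _ (by linarith) (by linarith)).intervalIntegrable _ _)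
      ?_ h1 ht1 (mode_ineq _ _ (by linarith) (by linarith))
    have : 0 < (k : ℝ) / 2 + (m / 2 - 2) := by linarith
    positivity

theorem lint_H (G : ℂ → ENNReal) (hG : Measurable G) :
    ∫⁻ z : UpperHalfPlane, G z = ∫⁻ z in UH, ENNReal.ofReal (1 / z.im ^ 2) * G z := by
  have hpres : MeasurePreserving UpperHalfPlane.coe (volume.comap UpperHalfPlane.coe)
      (volume.restrict (Set.range UpperHalfPlane.coe)) :=
    ⟨UpperHalfPlane.measurable_coe, by rw [UpperHalfPlane.measurableEmbedding_coe.map_comap]⟩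
  have hr : Set.range UpperHalfPlane.coe = UH := by
    ext z
    constructor
    · rintro ⟨w, rfl⟩; exact w.im_pos
    · intro hz; exact ⟨⟨z, hz⟩, rfl⟩
  rw [UpperHalfPlane.volume_def, ← hr,
    ← hpres.lintegral_comp_emb UpperHalfPlane.measurableEmbedding_coe,
    lintegral_withDensity_eq_lintegral_mul _ _ (show Measurable fun z : UpperHalfPlane => G z from hG.comp UpperHalfPlane.measurable_coe)]
  · refine lintegral_congr fun z => ?_
    simp only [Pi.mul_apply, Function.comp]
    congr 1
    rw [← ENNReal.ofReal_coe_nnreal]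
    congr 1
    push_cast
    simp
  · refine Measurable.coe_nnreal_ennreal ?_
    refine Measurable.pow_const (Measurable.div measurable_const ?_) 2
    exact (UpperHalfPlane.continuous_im.measurable).subtype_mk

/-- inverse Cayley transform -/
def cay (w : ℂ) : ℂ := I * (1 + w) / (1 - w)

theorem one_sub_ne {w : ℂ} (hw : w ∈ Metric.ball (0:ℂ) 1) : 1 - w ≠ 0 := by
  intro h
  have : w = 1 := (sub_eq_zero.1 h).symm
  rw [this] at hw
  simp at hw

theorem cay_deriv {w : ℂ} (hw : 1 - w ≠ 0) : HasDerivAt cay (2 * I / (1 - w) ^ 2) w := by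
  have h1 : HasDerivAt (fun w : ℂ => I * (1 + w)) (I * 1) w :=
    ((hasDerivAt_id w).const_add 1).const_mul I
  have h2 : HasDerivAt (fun w : ℂ => 1 - w) (-1) w := (hasDerivAt_id w).const_sub 1
  refine (h1.div h2 hw).congr_deriv ?_
  field_simp
  ring

theorem cay_im {w : ℂ} (hw : 1 - w ≠ 0) : (cay w).im = (1 - ‖w‖ ^ 2) / ‖1 - w‖ ^ 2 := by
  unfold cay
  have h : Complex.normSq (1 - w) ≠ 0 := by simpa using hw
  rw [← Complex.normSq_eq_norm_sq, ← Complex.normSq_eq_norm_sq, Complex.div_im]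
  rw [← sub_div]
  congr 1
  simp [Complex.normSq_apply]
  ring_nf

theorem cay_inv {w : ℂ} (hw : 1 - w ≠ 0) : (cay w - I) / (cay w + I) = w := by
  unfold cay
  have e1 : I * (1 + w) / (1 - w) - I = 2 * I * w / (1 - w) := by field_simp; ring
  have e2 : I * (1 + w) / (1 - w) + I = 2 * I / (1 - w) := by field_simp; ring
  rw [e1, e2, div_div_div_cancel_right₀ hw]
  field_simp

theorem norm_sq_add_I (z : ℂ) : ‖z + I‖ ^ 2 = ‖z - I‖ ^ 2 + 4 * z.im := by
  rw [← Complex.normSq_eq_norm_sq, ← Complex.normSq_eq_norm_sq]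
  simp [Complex.normSq_apply]
  ring

theorem add_I_ne {z : ℂ} (hz : z ∈ UH) : z + I ≠ 0 := by
  intro h
  have := congrArg Complex.im h
  simp at this
  have h2 : 0 < z.im := hz
  linarith

theorem cay_image : cay '' Metric.ball 0 1 = UH := by
  ext z
  constructor
  · rintro ⟨w, hw, rfl⟩
    have h1 := one_sub_ne hw
    show 0 < (cay w).im
    rw [cay_im h1]
    have h2 : ‖w‖ < 1 := by simpa using hw
    have h3 : 0 < 1 - ‖w‖ ^ 2 := by nlinarith [norm_nonneg w]
    positivity
  · intro hz
    have h1 := add_I_ne hz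
    have h2 : 0 < z.im := hz
    refine ⟨(z - I) / (z + I), ?_, ?_⟩
    · rw [mem_ball_zero_iff, norm_div, div_lt_one (by positivity)]
      have := norm_sq_add_I z
      nlinarith [norm_nonneg (z + I), norm_nonneg (z - I)]
    · unfold cay
      have e1 : 1 + (z - I) / (z + I) = 2 * z / (z + I) := by field_simp; ring
      have e2 : 1 - (z - I) / (z + I) = 2 * I / (z + I) := by field_simp; ring
      rw [e1, e2, mul_div_assoc', div_div_div_cancel_right₀ h1]
      field_simp

theorem cay_lint (g : ℂ → ENNReal) : ∫⁻ z in UH, g z =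
    ∫⁻ w in Metric.ball (0:ℂ) 1, ENNReal.ofReal (‖2 * I / (1 - w) ^ 2‖ ^ 2) * g (cay w) := by
  rw [← cay_image]
  have hinj : Set.InjOn cay (Metric.ball 0 1) := by
    intro x hx y hy h
    rw [← cay_inv (one_sub_ne hx), ← cay_inv (one_sub_ne hy), h]
  rw [lintegral_image_eq_lintegral_abs_det_fderiv_mul volume measurableSet_ball
    (fun w hw => ((cay_deriv (one_sub_ne hw)).hasFDerivAt.restrictScalars ℝ).hasFDerivWithinAt)
    hinj g]
  refine setLIntegral_congr_fun measurableSet_ball fun w hw => ?_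
  congr 2
  rw [ContinuousLinearMap.det]
  simp [LinearMap.det_restrictScalars, Algebra.norm_complex_eq, Complex.normSq_eq_norm_sq]
  rw [abs_of_nonneg (by positivity), div_pow]

theorem radial_polar (ψ : ℝ → ENNReal) (hψ : Measurable ψ) :
    2 * ∫⁻ w in Metric.ball (0:ℂ) 1, ψ (‖w‖ ^ 2) =
      ENNReal.ofReal (2 * π) * ∫⁻ x in Set.Ioo (0:ℝ) 1, ψ x := by
  set Ψ : ℝ → ENNReal := Set.indicator (Set.Iio 1) ψ with hΨ
  have hΨm : Measurable Ψ := hψ.indicator measurableSet_Iio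
  have h1 : ∫⁻ w in Metric.ball (0:ℂ) 1, ψ (‖w‖ ^ 2) = ∫⁻ w : ℂ, Ψ (‖w‖ ^ 2) := by
    rw [← lintegral_indicator measurableSet_ball]
    refine lintegral_congr fun w => ?_
    by_cases hw : ‖w‖ < 1
    · rw [Set.indicator_of_mem (by simpa using hw), hΨ, Set.indicator_of_mem]
      show ‖w‖ ^ 2 < 1
      nlinarith [norm_nonneg w]
    · rw [Set.indicator_of_notMem (by simpa using hw), hΨ, Set.indicator_of_notMem]
      show ¬ ‖w‖ ^ 2 < 1
      nlinarith [norm_nonneg w]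
  rw [h1, ← Complex.lintegral_comp_polarCoord_symm, polarCoord_target]
  have h2 : ∫⁻ p in Set.Ioi (0:ℝ) ×ˢ Set.Ioo (-π) π,
      ENNReal.ofReal p.1 • Ψ (‖Complex.polarCoord.symm p‖ ^ 2) =
      ∫⁻ p in Set.Ioi (0:ℝ) ×ˢ Set.Ioo (-π) π, (ENNReal.ofReal p.1 * Ψ (p.1 ^ 2)) * 1 := by
    refine lintegral_congr fun p => ?_
    rw [Complex.norm_polarCoord_symm, sq_abs, smul_eq_mul, mul_one]
  have hm1 : Measurable fun r : ℝ => ENNReal.ofReal r * Ψ (r ^ 2) := by fun_prop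
  rw [h2, Measure.volume_eq_prod, ← Measure.prod_restrict,
    lintegral_prod_mul (f := fun r : ℝ => ENNReal.ofReal r * Ψ (r ^ 2)) (g := fun _ => 1)
      hm1.aemeasurable aemeasurable_const]
  have h3 : ∫⁻ x in Set.Ioo (0:ℝ) 1, ψ x = ∫⁻ x in Set.Ioi 0, Ψ x := by
    rw [hΨ, setLIntegral_indicator measurableSet_Iio, Set.inter_comm, Set.Ioi_inter_Iio]
  have h4 : (fun r : ℝ => r ^ 2) '' Set.Ioi 0 = Set.Ioi 0 := by
    ext x
    constructor
    · rintro ⟨r, hr, rfl⟩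
      exact pow_pos (show (0:ℝ) < r from hr) 2
    · intro hx
      exact ⟨√x, Real.sqrt_pos.2 hx, Real.sq_sqrt (le_of_lt hx)⟩
  have h5 : ∫⁻ x in Set.Ioi 0, Ψ x = 2 * ∫⁻ r in Set.Ioi 0, ENNReal.ofReal r * Ψ (r ^ 2) := by
    conv_lhs => rw [← h4]
    rw [lintegral_image_eq_lintegral_abs_deriv_mul measurableSet_Ioi (f' := fun r => 2 * r)
      (fun r _ => by simpa using (hasDerivAt_pow 2 r).hasDerivWithinAt), ← lintegral_const_mul _ hm1]
    · refine setLIntegral_congr_fun measurableSet_Ioi fun r hr => ?_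
      have hr0 : (0:ℝ) < r := hr
      rw [abs_of_pos (by positivity), ENNReal.ofReal_mul (by norm_num), mul_assoc]
      simp
    · intro x hx y hy h
      exact (pow_left_inj₀ (le_of_lt hx) (le_of_lt hy) two_ne_zero).1 h
  rw [h3, h5]
  simp only [lintegral_const, MeasurableSet.univ, Measure.restrict_apply, Set.univ_inter,
    Real.volume_Ioo, one_mul]
  rw [show π - -π = 2 * π by ring]
  ring

/-- squared modulus of the Cayley transform -/
def cX (z : ℂ) : ℝ := ‖(z - I) / (z + I)‖ ^ 2

theorem cX_meas : Measurable cX := by unfold cX; fun_prop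

theorem radial (φ : ℝ → ENNReal) (hφ : Measurable φ) :
    2 * ∫⁻ z : UpperHalfPlane, φ (cX z) =
      ENNReal.ofReal (2 * π) *
        ∫⁻ x in Set.Ioo (0:ℝ) 1, ENNReal.ofReal (4 / (1 - x) ^ 2) * φ x := by
  rw [← radial_polar _ (by fun_prop), lint_H (fun z => φ (cX z)) (hφ.comp cX_meas), cay_lint]
  congr 1
  refine setLIntegral_congr_fun measurableSet_ball fun w hw => ?_
  have h1 := one_sub_ne hw
  have h2 : ‖w‖ < 1 := by simpa using hw
  have h3 : 0 < 1 - ‖w‖ ^ 2 := by nlinarith [norm_nonneg w]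
  rw [cX, cay_inv h1, ← mul_assoc, ← ENNReal.ofReal_mul (by positivity), cay_im h1]
  congr 2
  have h4 : ‖1 - w‖ ≠ 0 := by simpa using h1
  simp
  field_simp
  norm_num

theorem count_Gam (Γ : Subgroup SL2Z) : Countable Γ := by
  have : Countable SL2Z := by
    have : Countable (Matrix (Fin 2) (Fin 2) ℤ) := inferInstanceAs (Countable (Fin 2 → Fin 2 → ℤ))
    exact Subtype.countable
  exact Subtype.countable

theorem mp_SL (g : SL2Z) :
    MeasurePreserving (fun z : UpperHalfPlane => g • z) volume volume := by
  exact measurePreserving_smul (Matrix.SpecialLinearGroup.mapGL ℝ g) (volume : Measure UpperHalfPlane)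

theorem crit (Γ : Subgroup SL2Z) (w : UpperHalfPlane → ENNReal) (hwm : Measurable w)
    (S : Set UpperHalfPlane) (hS : MeasurableSet S)
    (hinj : ∀ γ : Γ, γ ≠ 1 → ∀ z ∈ S, (γ : SL2Z) • z ∉ S)
    (hw : ∀ z, w z ≤ ∑' γ : {γ : Γ // γ ≠ 1}, w (((γ : Γ) : SL2Z) • z)) :
    ∫⁻ z in S, w z ≤ ∫⁻ z in Sᶜ, w z := by
  have := count_Gam Γ
  have hT : ∀ g : SL2Z, MeasurableSet ((fun z : UpperHalfPlane => g⁻¹ • z) ⁻¹' S) :=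
    fun g => (mp_SL g⁻¹).measurable hS
  have hint : ∀ g : SL2Z, ∫⁻ z in S, w (g • z) =
      ∫⁻ z in ((fun z : UpperHalfPlane => g⁻¹ • z) ⁻¹' S), w z := by
    intro g
    rw [← lintegral_indicator hS, ← lintegral_indicator (hT g),
      ← (mp_SL g).lintegral_comp (hwm.indicator (hT g))]
    refine lintegral_congr fun z => ?_
    by_cases hz : z ∈ S
    · rw [Set.indicator_of_mem hz, Set.indicator_of_mem]
      simpa using hz
    · rw [Set.indicator_of_notMem hz, Set.indicator_of_notMem]
      simpa using hz
  calc ∫⁻ z in S, w z ≤ ∫⁻ z in S, ∑' γ : {γ : Γ // γ ≠ 1}, w (((γ : Γ) : SL2Z) • z) :=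
        lintegral_mono hw
    _ = ∑' γ : {γ : Γ // γ ≠ 1}, ∫⁻ z in S, w (((γ : Γ) : SL2Z) • z) :=
        lintegral_tsum fun γ => (hwm.comp (mp_SL _).measurable).aemeasurable
    _ = ∑' γ : {γ : Γ // γ ≠ 1},
        ∫⁻ z in ((fun z : UpperHalfPlane => ((γ : Γ) : SL2Z)⁻¹ • z) ⁻¹' S), w z :=
        tsum_congr fun γ => hint _
    _ = ∫⁻ z in ⋃ γ : {γ : Γ // γ ≠ 1},
        ((fun z : UpperHalfPlane => ((γ : Γ) : SL2Z)⁻¹ • z) ⁻¹' S), w z := by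
        rw [lintegral_iUnion (fun γ => hT _)]
        intro γ δ hne
        refine Set.disjoint_left.2 fun z hz hz' => ?_
        have h1 : ((γ : Γ) : SL2Z)⁻¹ • z ∈ S := hz
        have h2 : ((δ : Γ) : SL2Z)⁻¹ • z ∈ S := hz'
        refine hinj ((δ : Γ)⁻¹ * (γ : Γ)) ?_ _ h1 ?_
        · intro h
          exact hne (Subtype.ext (inv_mul_eq_one.1 h).symm)
        · rw [smul_smul]
          simpa using h2
    _ ≤ ∫⁻ z in Sᶜ, w z := by
        refine lintegral_mono_set ?_
        intro z hz hzS
        obtain ⟨γ, hγ⟩ := Set.mem_iUnion.1 hz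
        refine hinj ((γ : Γ)⁻¹) ?_ z hzS ?_
        · intro h
          exact γ.2 (inv_eq_one.1 h)
        · simpa using hγ

theorem tsum_crit {ι : Type} (f : ι → ℂ) (a : ι) (h0 : ∑' i, f i = 0) :
    ENNReal.ofReal ‖f a‖ ≤ ∑' i : {i : ι // i ≠ a}, ENNReal.ofReal ‖f i‖ := by
  classical
  simp only [ofReal_norm_eq_enorm]
  by_cases htop : ∑' i : {i : ι // i ≠ a}, ‖f i‖ₑ = ⊤
  · rw [htop]; exact le_top
  have hs : Summable fun i : {i : ι // i ≠ a} => f i := by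
    have h1 : Summable fun i : {i : ι // i ≠ a} => ‖f i‖₊ :=
      ENNReal.tsum_coe_ne_top_iff_summable.1 htop
    exact Summable.of_nnnorm h1
  have hs1 : Summable fun i : {i : ι // i ∉ ({a} : Finset ι)} => f i := by
    have e : {i : ι // i ∉ ({a} : Finset ι)} ≃ {i : ι // i ≠ a} :=
      Equiv.subtypeEquivRight (by simp)
    exact (Equiv.summable_iff (Equiv.subtypeEquivRight (p := fun i => i ∉ ({a} : Finset ι))
      (q := fun i => i ≠ a) (by simp))).2 hs
  have hsf : Summable f := (Finset.summable_compl_iff {a}).1 hs1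
  have h2 := hsf.tsum_subtype_add_tsum_subtype_compl {a}
  rw [h0, tsum_singleton] at h2
  have h3 : f a = -∑' i : {i : ι // i ≠ a}, f i := eq_neg_of_add_eq_zero_left h2
  rw [h3, enorm_neg]
  exact enorm_tsum_le_tsum_enorm

theorem one_sub_cX {z : ℂ} (hz : z ∈ UH) : 1 - cX z = 4 * z.im / ‖z + I‖ ^ 2 := by
  have h1 : ‖z + I‖ ≠ 0 := by simpa using add_I_ne hz
  unfold cX
  rw [norm_div, div_pow]
  field_simp
  have := norm_sq_add_I z
  linarith

theorem cX_nonneg (z : ℂ) : 0 ≤ cX z := by unfold cX; positivity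

theorem cX_lt_one {z : ℂ} (hz : z ∈ UH) : cX z < 1 := by
  have h1 : 0 < ‖z + I‖ := by simpa using add_I_ne hz
  have h2 : 0 < z.im := hz
  have := one_sub_cX hz
  have : 0 < 1 - cX z := by rw [this]; positivity
  linarith

theorem fkm_norm (m : ℝ) (k : ℕ) {z : ℂ} (hz : z ∈ UH) :
    ‖fkm m k z‖ * z.im ^ (m / 2) = bG (k / 2) (m / 2) (cX z) := by
  have h1 : 0 < ‖z + I‖ := by simpa using add_I_ne hz
  have h2 : 0 < z.im := hz
  unfold bG
  rw [one_sub_cX hz]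
  unfold fkm cX
  rw [show (m : ℂ) + (k : ℂ) = ((m + k : ℝ) : ℂ) by push_cast; rfl, norm_div, norm_mul,
    Complex.norm_cpow_real, Complex.norm_cpow_real, norm_pow]
  have e1 : (‖(z - I) / (z + I)‖ ^ 2) ^ ((k : ℝ) / 2) = ‖z - I‖ ^ k / ‖z + I‖ ^ k := by
    rw [← Real.rpow_natCast, ← Real.rpow_mul (norm_nonneg _)]
    rw [show ((2 : ℕ) : ℝ) * ((k : ℝ) / 2) = k by push_cast; ring, Real.rpow_natCast, norm_div,
      div_pow]
  have e2 : (4 * z.im / ‖z + I‖ ^ 2) ^ (m / 2) = 2 ^ m * z.im ^ (m / 2) / ‖z + I‖ ^ m := by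
    rw [Real.div_rpow (by positivity) (by positivity), Real.mul_rpow (by norm_num) h2.le,
      show (4 : ℝ) = 2 ^ (2:ℕ) by norm_num]
    rw [← Real.rpow_natCast, ← Real.rpow_mul (by norm_num), ← Real.rpow_natCast,
      ← Real.rpow_mul (by positivity)]
    rw [show ((2 : ℕ) : ℝ) * (m / 2) = m by push_cast; ring]
  rw [e1, e2, Real.rpow_add h1, Real.rpow_natCast]
  have e3 : ‖(2 * I : ℂ)‖ = 2 := by simp
  rw [e3]
  field_simp

theorem term_norm (Γ : Subgroup SL2Z) (η : Γ → ℂ → ℂ) (hη : IsMultiplierSystem Γ η)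
    (χ : Γ →* ℂˣ) (hχ : HasFiniteOrderChar Γ χ)
    (m : ℝ) (j : ℕ) (hm : m = 5 / 2 + j) (k : ℕ) (γ : Γ) (z : UpperHalfPlane) :
    ‖PTerm Γ η χ m j k γ z‖ * z.im ^ (m / 2) =
      bG (k / 2) (m / 2) (cX (((γ : SL2Z) • z : UpperHalfPlane) : ℂ)) := by
  rw [← fkm_norm m k (coe_mem_UH _)]
  have hχ1 : ‖(χ γ : ℂ)‖ = 1 := by
    obtain ⟨n, hn, h⟩ := hχ
    refine norm_eq_one_of_pow_eq_one (n := n) ?_ hn.ne'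
    have := congrArg (fun x : ℂˣ => (x : ℂ)) (h γ)
    simpa using this
  have hsq := hη.sq γ z (coe_mem_UH z)
  have him : ((γ : SL2Z) • z : UpperHalfPlane).im = z.im / (‖η γ z‖ ^ 2) ^ 2 := by
    rw [ModularGroup.im_smul_eq_div_normSq, ModularGroup.denom_apply, Complex.normSq_eq_norm_sq,
      ← norm_pow (η γ z), hsq]
    simp [entry]
  have hpos : 0 < ‖η γ z‖ := by
    rcases (norm_nonneg (η γ z)).lt_or_eq with h | h
    · exact h
    · rw [← h] at him
      have := ((γ : SL2Z) • z : UpperHalfPlane).im_pos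
      rw [him] at this
      simp at this
  unfold PTerm
  rw [norm_mul, norm_mul, RCLike.norm_conj, hχ1, one_mul, ← coe_act_eq, norm_zpow,
    UpperHalfPlane.coe_im, him, mul_assoc]
  congr 1
  rw [Real.div_rpow z.im_pos.le (by positivity), ← pow_mul, ← Real.rpow_natCast,
    ← Real.rpow_mul hpos.le, ← Real.rpow_intCast,
    show ((-(5 + 2 * (j : ℤ)) : ℤ) : ℝ) = -(((2 * 2 : ℕ) : ℝ) * (m / 2)) by
      rw [hm]; push_cast; ring, Real.rpow_neg hpos.le]
  field_simp

theorem cX_lt_iff (u : ℝ) (hu : 0 < u) (z : UpperHalfPlane) :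
    cX z < u / (1 + u) ↔ Real.cosh (dist z UpperHalfPlane.I) < 1 + 2 * u := by
  have h1 : 0 < ‖(z : ℂ) + I‖ := by simpa using add_I_ne (coe_mem_UH z)
  have h3 := z.im_pos
  have h4 : z.im = (z : ℂ).im := rfl
  have h2 := norm_sq_add_I z
  rw [UpperHalfPlane.cosh_dist, Complex.dist_eq, UpperHalfPlane.coe_I, UpperHalfPlane.I_im]
  unfold cX
  rw [norm_div, div_pow, div_lt_div_iff₀ (by positivity) (by positivity), h2,
    add_lt_add_iff_left, div_lt_iff₀ (by positivity), ← h4]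
  constructor <;> intro h <;> nlinarith

theorem bG_meas (a b : ℝ) : Measurable (bG a b) := by unfold bG; fun_prop

theorem rad_set (a m : ℝ) (A : Set ℝ) (hA : MeasurableSet A) :
    2 * ∫⁻ z in {z : UpperHalfPlane | cX z ∈ A}, ENNReal.ofReal (bG a (m / 2) (cX z)) =
      ENNReal.ofReal (2 * π) * (ENNReal.ofReal 4 *
        ∫⁻ x in A ∩ Set.Ioo (0:ℝ) 1, ENNReal.ofReal (bG a (m / 2 - 2) x)) := by
  have hmeas : MeasurableSet {z : UpperHalfPlane | cX z ∈ A} :=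
    (cX_meas.comp UpperHalfPlane.measurable_coe) hA
  have hb := (bG_meas a (m / 2)).ennreal_ofReal
  have h := radial (A.indicator fun x => ENNReal.ofReal (bG a (m / 2) x)) (hb.indicator hA)
  rw [← lintegral_indicator hmeas]
  have e1 : ∀ z : UpperHalfPlane, ({z : UpperHalfPlane | cX z ∈ A}.indicator
      (fun z : UpperHalfPlane => ENNReal.ofReal (bG a (m / 2) (cX z)))) z =
      (A.indicator fun x => ENNReal.ofReal (bG a (m / 2) x)) (cX z) := by
    intro z
    by_cases hz : cX z ∈ A
    · rw [Set.indicator_of_mem hz, Set.indicator_of_mem (by exact hz)]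
    · rw [Set.indicator_of_notMem hz, Set.indicator_of_notMem (by exact hz)]
  rw [lintegral_congr e1, h]
  congr 1
  rw [← lintegral_const_mul _ (bG_meas a (m / 2 - 2)).ennreal_ofReal,
    ← setLIntegral_indicator hA]
  refine setLIntegral_congr_fun measurableSet_Ioo fun x hx => ?_
  by_cases hxA : x ∈ A
  · beta_reduce
    rw [Set.indicator_of_mem hxA, Set.indicator_of_mem hxA]
    have h1 : 0 < 1 - x := by linarith [hx.2]
    rw [← ENNReal.ofReal_mul (by positivity), ← ENNReal.ofReal_mul (by norm_num)]
    congr 1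
    unfold bG
    rw [Real.rpow_sub h1, Real.rpow_two]
    ring
  · beta_reduce
    rw [Set.indicator_of_notMem hxA, Set.indicator_of_notMem hxA, mul_zero]


theorem stmt5 (N : ℕ) (hN : 0 < N) (Γ : Subgroup SL2Z) (hΓ : Γ.FiniteIndex)
    (hcong : ∀ γ : Γ,
      (N : ℤ) ∣ (((γ : SL2Z) : Matrix (Fin 2) (Fin 2) ℤ) 0 0 - 1) ∧
      (N : ℤ) ∣ (((γ : SL2Z) : Matrix (Fin 2) (Fin 2) ℤ) 0 1) ∧
      (N : ℤ) ∣ (((γ : SL2Z) : Matrix (Fin 2) (Fin 2) ℤ) 1 0) ∧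
      (N : ℤ) ∣ (((γ : SL2Z) : Matrix (Fin 2) (Fin 2) ℤ) 1 1 - 1))
    (η : Γ → ℂ → ℂ) (hη : IsMultiplierSystem Γ η)
    (χ : Γ →* ℂˣ) (hχ : HasFiniteOrderChar Γ χ)
    (m : ℝ) (j : ℕ) (hm : m = 5 / 2 + j)
    (hmI : ∀ γ : Γ, ((γ : SL2Z) : Matrix (Fin 2) (Fin 2) ℤ) = -1 →
      (χ γ : ℂ) = η γ I ^ (-(5 + 2 * (j : ℤ)))) (k : ℕ)
    (hcase :
      (k = 0 ∧ (N : ℝ) > 4 * (2 : ℝ) ^ (1 / (m - 2)) * Real.sqrt ((4 : ℝ) ^ (1 / (m - 2)) - 1)) ∨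
      (m = 4 ∧ (N : ℝ) > 4 / ((2 : ℝ) ^ (1 / ((k : ℝ) + 2)) - (2 : ℝ) ^ (-(1 / ((k : ℝ) + 2))))) ∨
      (0 < k ∧ (k : ℝ) ≤ m - 4 ∧
        (N : ℝ) ≥ 4 * Real.sqrt ((((k : ℝ) + 2) / (m - 2)) * (1 + ((k : ℝ) + 2) / (m - 2)))) ∨
      (0 < m - 4 ∧ m - 4 ≤ (k : ℝ) ∧
        (N : ℝ) ≥ 4 * Real.sqrt (((k : ℝ) / (m - 4)) * (1 + (k : ℝ) / (m - 4))))) :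
    ∃ z ∈ UH, PoincareP Γ η χ m j k z ≠ 0 := by
  by_contra hcon
  push Not at hcon
  obtain ⟨u, hu, hNu⟩ : ∃ u : ℝ, 0 < u ∧ 16 * u * (1 + u) = (N : ℝ) ^ 2 := by
    have hN' : (0:ℝ) < N := by exact_mod_cast hN
    have hs := Real.sq_sqrt (show (0:ℝ) ≤ 1 + N ^ 2 / 4 by positivity)
    have hs1 : 1 < Real.sqrt (1 + (N:ℝ) ^ 2 / 4) := by
      refine Real.lt_sqrt_of_sq_lt ?_
      have : 0 < (N:ℝ) ^ 2 := by positivity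
      linarith
    exact ⟨(-1 + Real.sqrt (1 + (N:ℝ) ^ 2 / 4)) / 2, by linarith, by nlinarith⟩
  set t := u / (1 + u) with ht
  have ht0 : 0 < t := by positivity
  have ht1 : t < 1 := by rw [ht, div_lt_one (by positivity)]; linarith
  have hhalf := half_all N m j k hm u hu hNu hcase
  rw [← ht] at hhalf
  have hS : {z : UpperHalfPlane | cX z ∈ Set.Iio t}ᶜ = {z : UpperHalfPlane | cX z ∈ Set.Ici t} := by
    ext z; simp
  have hcX : Measurable fun z : UpperHalfPlane => cX z := cX_meas.comp UpperHalfPlane.measurable_coe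
  have hcrit := crit Γ (fun z => ENNReal.ofReal (bG (k / 2) (m / 2) (cX z)))
    ((bG_meas _ _).comp hcX).ennreal_ofReal {z : UpperHalfPlane | cX z ∈ Set.Iio t}
    (hcX measurableSet_Iio)
    (by
      intro γ hγ z hz hz'
      exact disc_inj N γ u hu.le hNu (frob_bound N hN Γ hcong η hη γ hγ) z
        ((cX_lt_iff u hu z).1 hz) ((cX_lt_iff u hu _).1 hz'))
    (by
      intro z
      have h0 := hcon z (coe_mem_UH z)
      unfold PoincareP at h0
      have h1 := tsum_crit _ 1 h0
      have h2 := mul_le_mul_left h1 (ENNReal.ofReal (z.im ^ (m / 2)))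
      rw [← ENNReal.tsum_mul_right, ← ENNReal.ofReal_mul (norm_nonneg _),
        term_norm Γ η hη χ hχ m j hm] at h2
      refine le_trans (le_of_eq ?_) (h2.trans (le_of_eq ?_))
      · simp
      · refine tsum_congr fun γ => ?_
        rw [← ENNReal.ofReal_mul (norm_nonneg _), term_norm Γ η hη χ hχ m j hm])
  rw [hS] at hcrit
  have h2 := mul_le_mul_right hcrit 2
  rw [rad_set _ _ _ measurableSet_Iio, rad_set _ _ _ measurableSet_Ici] at h2
  rw [ENNReal.mul_le_mul_iff_right (by simpa using Real.pi_pos) ENNReal.ofReal_ne_top,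
    ENNReal.mul_le_mul_iff_right (by simp) ENNReal.ofReal_ne_top] at h2
  have e1 : Set.Iio t ∩ Set.Ioo 0 1 = Set.Ioo 0 t := by
    ext x; simp only [Set.mem_inter_iff, Set.mem_Iio, Set.mem_Ioo]
    constructor
    · rintro ⟨a, b, c⟩; exact ⟨b, a⟩
    · rintro ⟨a, b⟩; exact ⟨b, a, by linarith⟩
  have e2 : Set.Ici t ∩ Set.Ioo 0 1 = Set.Ico t 1 := by
    ext x; simp only [Set.mem_inter_iff, Set.mem_Ici, Set.mem_Ico, Set.mem_Ioo]
    constructor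
    · rintro ⟨a, b, c⟩; exact ⟨a, c⟩
    · rintro ⟨a, b⟩; exact ⟨a, by linarith, b⟩
  rw [e1, e2] at h2
  exact absurd hhalf (not_lt.2 h2)
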